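/- Let α ≥ 2 and let S be a binary matrix with pairwise distinct rows that contains the all-zero vector as a row, has no inessential column, and in which every pairwise row Hamming distance lies in {α, α+1}. Then the number of rows of weight α+1 is at most (α+1)² − (α+1) + 1. -/

import Mathlib

/-!
Put `k = α + 1`. By parity, two rows of weight `k` are always at the same distance `2δ`, where
`δ = ⌊k / 2⌋`, so their supports are `k`-sets with constant pairwise intersection `r = k - δ`.
If there were more than `k² - k + 1` of them, they would form a sunflower (a case of Deza's theorem,
`exists_kernel`): all contain a common set `K` of size `r`. Every row of weight `α` meets all of
these supports in equally many columns; as it misses some petal, it misses every petal. Hence a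
column in a petal has a single 1, and it is inessential because distances are at least `α ≥ 2`.

For Deza's theorem the constant intersection gives, for all integer weights `w` on the family, the
identity `∑_y (∑_{i : y ∈ A i} w i)² = r (∑ w)² + δ ∑ w²`. If a point lies in `d` members and
outside `e` members, the weights `e` and `-d` yield `d e ≤ δ (d + e)`; for a large family this forces
`d ≤ δ` or `e ≤ δ`. The weights `1` then show that at least `r` points have `e ≤ δ`. All but at most
`r δ` members contain `r` such points, and any remaining member would have to meet more than `k`
pairwise disjoint petals.
-/

/-- The support of row `i`: the set of columns where the binary matrix `S` has a 1. -/
def rowSupport {n d : ℕ} (S : Fin n → Fin d → Bool) (i : Fin n) : Finset (Fin d) :=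
  Finset.univ.filter fun c => S i c = true

/-- A column `j` of a binary matrix is inessential if (1) it exactly distinguishes
some row `i` from all other rows, and (2) the rows remain pairwise distinct after
deleting column `j`. -/
def Inessential {n d : ℕ} (S : Fin n → Fin d → Bool) (j : Fin d) : Prop :=
  (∃ i : Fin n, (∀ l, l ≠ i → S i j ≠ S l j) ∧ ∀ l l', l ≠ i → l' ≠ i → S l j = S l' j) ∧
  (∀ i i' : Fin n, i ≠ i' → ∃ c : Fin d, c ≠ j ∧ S i c ≠ S i' c)

open Finset

/-- The integer indicator of `y ∈ s`. -/
def ind {V : Type*} [DecidableEq V] (s : Finset V) (y : V) : ℤ := if y ∈ s then 1 else 0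

lemma sum_ind_mul {V : Type*} [Fintype V] [DecidableEq V] (s t : Finset V) :
    ∑ y, ind s y * ind t y = ((s ∩ t).card : ℤ) := by
  simp only [ind, ← ite_and, mul_ite, mul_one, mul_zero]
  rw [← Finset.sum_filter, Finset.sum_const, nsmul_eq_mul, mul_one]
  congr 2
  ext y
  simp [and_comm]

/-- The Gram matrix of the indicator vectors is `δ I + r J`; this is its quadratic form. -/
lemma gram_identity {ι V : Type*} [DecidableEq ι] [Fintype V] [DecidableEq V]
    (T : Finset ι) (A : ι → Finset V) (k r δ : ℕ) (hkr : k = r + δ)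
    (hk : ∀ i ∈ T, (A i).card = k)
    (hI : ∀ i ∈ T, ∀ j ∈ T, i ≠ j → (A i ∩ A j).card = r) (w : ι → ℤ) :
    ∑ y, (∑ i ∈ T, w i * ind (A i) y) ^ 2 =
      r * (∑ i ∈ T, w i) ^ 2 + δ * ∑ i ∈ T, w i ^ 2 := by
  have h1 : ∑ y, (∑ i ∈ T, w i * ind (A i) y) ^ 2 =
      ∑ i ∈ T, ∑ j ∈ T, w i * w j * ((A i ∩ A j).card : ℤ) := by
    simp_rw [sq, Finset.sum_mul_sum, ← sum_ind_mul, Finset.mul_sum]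
    rw [Finset.sum_comm]
    refine Finset.sum_congr rfl fun i _ => ?_
    rw [Finset.sum_comm]
    refine Finset.sum_congr rfl fun j _ => Finset.sum_congr rfl fun y _ => ?_
    ring
  have h2 : ∀ i ∈ T, ∑ j ∈ T, w i * w j * ((A i ∩ A j).card : ℤ) =
      ∑ j ∈ T, w i * w j * r + δ * w i ^ 2 := by
    intro i hi
    have : ∀ j ∈ T, w i * w j * ((A i ∩ A j).card : ℤ) =
        w i * w j * r + if i = j then δ * w i ^ 2 else 0 := by
      intro j hj
      by_cases h : i = j
      · subst h
        rw [Finset.inter_self, hk i hi, hkr, if_pos rfl]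
        push_cast
        ring
      · rw [hI i hi j hj h, if_neg h, add_zero]
    rw [Finset.sum_congr rfl this, Finset.sum_add_distrib, Finset.sum_ite_eq, if_pos hi]
  have h3 : ∑ i ∈ T, ∑ j ∈ T, w i * w j * (r : ℤ) = r * (∑ i ∈ T, w i) ^ 2 := by
    simp_rw [← Finset.sum_mul]
    rw [← Finset.sum_mul_sum]
    ring
  rw [h1, Finset.sum_congr rfl h2, Finset.sum_add_distrib, h3, ← Finset.mul_sum]

/-- A set meeting every member of a pairwise disjoint family has at least as many elements as the
family has members. -/
lemma card_le_of_meets {ι V : Type*} [DecidableEq V] (T : Finset ι) (P : ι → Finset V)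
    (B : Finset V) (hd : ∀ i ∈ T, ∀ j ∈ T, i ≠ j → Disjoint (P i) (P j))
    (hm : ∀ i ∈ T, ∃ y ∈ P i, y ∈ B) : T.card ≤ B.card := by
  choose f hf hfB using hm
  have hle := Finset.card_le_card_of_injOn (s := T.attach) (t := B) (fun i => f i.1 i.2)
    (fun i _ => hfB i.1 i.2) fun i _ j _ hij => by
      by_contra hne
      have hij' : f i.1 i.2 = f j.1 j.2 := hij
      exact Finset.disjoint_left.mp (hd i.1 i.2 j.1 j.2 fun h => hne (Subtype.ext h))
        (hf i.1 i.2) (hij' ▸ hf j.1 j.2)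
  rwa [Finset.card_attach] at hle

/-- In a large family a point lies in at most `δ` members or outside at most `δ` members. -/
lemma degree_dichotomy {ι V : Type*} [DecidableEq ι] [Fintype V] [DecidableEq V]
    (T : Finset ι) (A : ι → Finset V) (k r δ : ℕ) (hkr : k = r + δ)
    (hk : ∀ i ∈ T, (A i).card = k)
    (hI : ∀ i ∈ T, ∀ j ∈ T, i ≠ j → (A i ∩ A j).card = r)
    (hT : (δ + 1) ^ 2 < T.card) (x : V) :
    (T.filter fun i => x ∈ A i).card ≤ δ ∨ (T.filter fun i => x ∉ A i).card ≤ δ := by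
  by_contra! hcon
  obtain ⟨hd, he⟩ := hcon
  have hde : (T.filter fun i => x ∈ A i).card + (T.filter fun i => x ∉ A i).card = T.card :=
    Finset.card_filter_add_card_filter_not _
  set d := (T.filter fun i => x ∈ A i).card with hd_def
  set e := (T.filter fun i => x ∉ A i).card with he_def
  have hG := gram_identity T A k r δ hkr hk hI (fun i => if x ∈ A i then (e : ℤ) else -d)
  have hs1 : ∑ i ∈ T, (if x ∈ A i then (e : ℤ) else -d) = 0 := by
    rw [Finset.sum_ite, Finset.sum_const, Finset.sum_const, ← hd_def, ← he_def]
    simp only [nsmul_eq_mul]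
    ring
  have hs2 : ∑ i ∈ T, (if x ∈ A i then (e : ℤ) else -d) ^ 2 = d * e * (d + e) := by
    simp only [ite_pow]
    rw [Finset.sum_ite, Finset.sum_const, Finset.sum_const, ← hd_def, ← he_def]
    simp only [nsmul_eq_mul]
    ring
  have hx : ∑ i ∈ T, (if x ∈ A i then (e : ℤ) else -d) * ind (A i) x = d * e := by
    have : ∀ i ∈ T, (if x ∈ A i then (e : ℤ) else -d) * ind (A i) x =
        if x ∈ A i then (e : ℤ) else 0 := by
      intro i _
      by_cases h : x ∈ A i <;> simp [ind, h]
    rw [Finset.sum_congr rfl this, ← Finset.sum_filter, Finset.sum_const, ← hd_def, nsmul_eq_mul]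
  have hle := Finset.single_le_sum
    (f := fun y => (∑ i ∈ T, (if x ∈ A i then (e : ℤ) else -d) * ind (A i) y) ^ 2)
    (fun y _ => sq_nonneg _) (Finset.mem_univ x)
  rw [hG, hs1, hs2, hx] at hle
  have hpos : (0 : ℤ) < d * e := by
    have : 0 < d * e := Nat.mul_pos (by omega) (by omega)
    exact_mod_cast this
  have hmain : (d : ℤ) * e ≤ δ * (d + e) := by
    refine le_of_mul_le_mul_left ?_ hpos
    linarith
  have hd' : (δ : ℤ) + 1 ≤ d := by exact_mod_cast hd
  have he' : (δ : ℤ) + 1 ≤ e := by exact_mod_cast he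
  have hT' : ((δ : ℤ) + 1) ^ 2 < d + e := by
    rw [← hde] at hT
    exact_mod_cast hT
  nlinarith [mul_nonneg (sub_nonneg.mpr hd') (sub_nonneg.mpr he')]

/-- The case of Deza's theorem with intersection size at least half the set size: a family of more
than `k² - k + 1` such sets has a common kernel of size `r`. -/
lemma exists_kernel {ι V : Type*} [DecidableEq ι] [Fintype V] [DecidableEq V]
    (T : Finset ι) (A : ι → Finset V) (k r δ : ℕ) (hkr : k = r + δ) (hδ : 2 * δ ≤ k) (hk3 : 3 ≤ k)
    (hk : ∀ i ∈ T, (A i).card = k)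
    (hI : ∀ i ∈ T, ∀ j ∈ T, i ≠ j → (A i ∩ A j).card = r)
    (hT : k * k + 2 ≤ T.card + k) :
    ∃ K : Finset V, K.card = r ∧ ∀ i ∈ T, K ⊆ A i := by
  have hT1 : (δ + 1) ^ 2 < T.card := by nlinarith
  have hdich := degree_dichotomy T A k r δ hkr hk hI hT1
  -- the points missed by at most `δ` members
  set M : Finset V := univ.filter fun x => (T.filter fun i => x ∉ A i).card ≤ δ with hM
  have hMr : r ≤ M.card := by
    have hG := gram_identity T A k r δ hkr hk hI (fun _ => 1)
    have hdeg : ∀ y, ∑ i ∈ T, (1 : ℤ) * ind (A i) y = ((T.filter fun i => y ∈ A i).card : ℤ) := by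
      intro y
      simp [ind]
    simp_rw [hdeg] at hG
    simp only [Finset.sum_const, nsmul_eq_mul, mul_one, one_pow] at hG
    have hsum : ∑ y, ((T.filter fun i => y ∈ A i).card : ℤ) = k * T.card := by
      simp_rw [← hdeg, one_mul]
      rw [Finset.sum_comm]
      have : ∀ i ∈ T, ∑ y, ind (A i) y = (k : ℤ) := by
        intro i hi
        rw [← hk i hi]
        simp [ind]
      rw [Finset.sum_congr rfl this, Finset.sum_const, nsmul_eq_mul, mul_comm]
    -- pointwise `d (d - δ) ≤ 0` off `M`, and `d (d - δ) ≤ m (m - δ)` on `M`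
    have hpt : ∀ y, ((T.filter fun i => y ∈ A i).card : ℤ) ^ 2 ≤
        δ * ((T.filter fun i => y ∈ A i).card : ℤ) +
          if y ∈ M then (T.card : ℤ) * (T.card - δ) else 0 := by
      intro y
      have hle : (T.filter fun i => y ∈ A i).card ≤ T.card := Finset.card_filter_le _ _
      have hδT : δ ≤ T.card := by nlinarith
      set a := (T.filter fun i => y ∈ A i).card
      have hle' : (a : ℤ) ≤ T.card := by exact_mod_cast hle
      have hδT' : (δ : ℤ) ≤ T.card := by exact_mod_cast hδT
      have ha : (0 : ℤ) ≤ a := by positivity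
      by_cases hy : y ∈ M
      · rw [if_pos hy]
        nlinarith
      · rw [if_neg hy]
        have : a ≤ δ := by
          rcases hdich y with h | h
          · exact h
          · exact absurd (by simp [hM, h]) hy
        have : (a : ℤ) ≤ δ := by exact_mod_cast this
        nlinarith
    have htot := Finset.sum_le_sum fun y (_ : y ∈ (univ : Finset V)) => hpt y
    rw [hG, Finset.sum_add_distrib, ← Finset.mul_sum, hsum, ← Finset.sum_filter,
      Finset.sum_const, nsmul_eq_mul] at htot
    have hfM : (univ.filter fun y => y ∈ M) = M := by simp
    rw [hfM] at htot
    by_contra! hlt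
    have hlt' : (M.card : ℤ) + 1 ≤ r := by exact_mod_cast hlt
    have hm : (0 : ℤ) < T.card := by
      have : 0 < T.card := by nlinarith
      exact_mod_cast this
    have hδ' : 2 * (δ : ℤ) ≤ k := by exact_mod_cast hδ
    have hk' : (k : ℤ) = r + δ := by exact_mod_cast hkr
    have hT' : (k : ℤ) * k + 2 ≤ T.card + k := by exact_mod_cast hT
    have hk3' : (3 : ℤ) ≤ k := by exact_mod_cast hk3
    have hδ0 : (0 : ℤ) ≤ δ := by positivity
    have hmδ : (0 : ℤ) ≤ T.card - δ := by nlinarith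
    have h1 : (r : ℤ) * T.card + δ ≤ δ * k + M.card * (T.card - δ) := by
      refine le_of_mul_le_mul_left ?_ hm
      nlinarith
    have h2 : (M.card : ℤ) * (T.card - δ) ≤ (r - 1) * (T.card - δ) :=
      mul_le_mul_of_nonneg_right (by linarith) hmδ
    nlinarith
  obtain ⟨K, hKM, hKr⟩ := Finset.exists_subset_card_eq hMr
  refine ⟨K, hKr, ?_⟩
  have hbad : (T.filter fun i => ¬ K ⊆ A i).card ≤ r * δ := by
    have hsub : (T.filter fun i => ¬ K ⊆ A i) ⊆ K.biUnion fun x => T.filter fun i => x ∉ A i := by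
      intro i hi
      rw [Finset.mem_filter, Finset.not_subset] at hi
      obtain ⟨hiT, x, hx, hxA⟩ := hi
      exact Finset.mem_biUnion.mpr ⟨x, hx, Finset.mem_filter.mpr ⟨hiT, hxA⟩⟩
    calc _ ≤ _ := Finset.card_le_card hsub
      _ ≤ K.card * δ := Finset.card_biUnion_le_card_mul _ _ _ fun x hx => by
        have := hKM hx
        rw [hM, Finset.mem_filter] at this
        exact this.2
      _ = r * δ := by rw [hKr]
  have hgood : k < (T.filter fun i => K ⊆ A i).card := by
    have := Finset.card_filter_add_card_filter_not (s := T) (fun i => K ⊆ A i)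
    zify at *
    nlinarith [sq_nonneg ((r : ℤ) - δ)]
  intro b hb
  by_contra hKb
  -- members containing `K` have disjoint petals, and `A b` must meet every one of them
  have := card_le_of_meets (T.filter fun i => K ⊆ A i) (fun i => A i \ K) (A b) ?_ ?_
  · rw [hk b hb] at this
    omega
  · intro i hi j hj hij
    rw [Finset.mem_filter] at hi hj
    have heq : K = A i ∩ A j := Finset.eq_of_subset_of_card_le
      (Finset.subset_inter hi.2 hj.2) (by rw [hI i hi.1 j hj.1 hij, hKr])
    rw [Finset.disjoint_left]
    intro y hy hy'
    rw [Finset.mem_sdiff] at hy hy'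
    exact hy.2 (heq ▸ Finset.mem_inter.mpr ⟨hy.1, hy'.1⟩)
  · intro i hi
    rw [Finset.mem_filter] at hi
    by_contra! hno
    have hne : i ≠ b := by
      rintro rfl
      exact hKb hi.2
    have hsub : A i ∩ A b ⊆ K := by
      intro y hy
      rw [Finset.mem_inter] at hy
      by_contra hyK
      exact hno y (Finset.mem_sdiff.mpr ⟨hy.1, hyK⟩) hy.2
    have heq := Finset.eq_of_subset_of_card_le hsub (by rw [hI i hi.1 b hb hne, hKr])
    exact hKb (heq ▸ Finset.inter_subset_right)

lemma hammingDist_add {n d : ℕ} (S : Fin n → Fin d → Bool) (i j : Fin n) :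
    hammingDist (S i) (S j) + 2 * (rowSupport S i ∩ rowSupport S j).card =
      (rowSupport S i).card + (rowSupport S j).card := by
  unfold hammingDist rowSupport
  rw [← Finset.filter_and]
  simp only [Finset.card_filter]
  rw [Finset.mul_sum, ← Finset.sum_add_distrib, ← Finset.sum_add_distrib]
  refine Finset.sum_congr rfl fun c _ => ?_
  cases S i c <;> cases S j c <;> simp

theorem stmt9 {n d : ℕ} (α : ℕ) (hα : 2 ≤ α)
    (S : Fin n → Fin d → Bool)
    (hrows : ∀ i j : Fin n, i ≠ j → S i ≠ S j)
    (i₀ : Fin n) (hzero : ∀ c, S i₀ c = false)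
    (hiness : ∀ j : Fin d, ¬ Inessential S j)
    (hham : ∀ i j : Fin n, i ≠ j →
      hammingDist (S i) (S j) = α ∨ hammingDist (S i) (S j) = α + 1) :
    (Finset.univ.filter fun i : Fin n => (rowSupport S i).card = α + 1).card ≤
      (α + 1) ^ 2 - (α + 1) + 1 := by
  by_contra! hcon
  set T := Finset.univ.filter fun i : Fin n => (rowSupport S i).card = α + 1 with hT
  have hTk : (α + 1) * (α + 1) + 2 ≤ T.card + (α + 1) := by
    rw [sq] at hcon
    omega
  have hk : ∀ i ∈ T, (rowSupport S i).card = α + 1 := fun i hi => (Finset.mem_filter.mp hi).2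
  have hI : ∀ i ∈ T, ∀ j ∈ T, i ≠ j →
      (rowSupport S i ∩ rowSupport S j).card = α + 1 - (α + 1) / 2 := by
    intro i hi j hj hij
    have h1 := hammingDist_add S i j
    rw [hk i hi, hk j hj] at h1
    rcases hham i j hij with h | h <;> omega
  obtain ⟨K, hKr, hKs⟩ := exists_kernel T (rowSupport S) (α + 1) (α + 1 - (α + 1) / 2)
    ((α + 1) / 2) (by omega) (by omega) (by omega) hk hI hTk
  have hinter : ∀ i ∈ T, ∀ j ∈ T, i ≠ j → K = rowSupport S i ∩ rowSupport S j := by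
    intro i hi j hj hij
    exact Finset.eq_of_subset_of_card_le (Finset.subset_inter (hKs i hi) (hKs j hj))
      (by rw [hI i hi j hj hij, hKr])
  have hTbig : α + 1 < T.card := by nlinarith
  obtain ⟨i, hi⟩ : T.Nonempty := Finset.card_pos.mp (by omega)
  obtain ⟨c, hc, hcK⟩ : ∃ c ∈ rowSupport S i, c ∉ K :=
    Finset.exists_mem_notMem_of_card_lt_card (by rw [hk i hi, hKr]; omega)
  have hi0 : rowSupport S i₀ = ∅ := by simp [rowSupport, hzero]
  have hother : ∀ l, l ≠ i → S l c = false := by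
    intro l hl
    suffices h : c ∉ rowSupport S l by simpa [rowSupport] using h
    intro hcl
    by_cases hlT : l ∈ T
    · exact hcK ((hinter i hi l hlT hl.symm) ▸ Finset.mem_inter.mpr ⟨hc, hcl⟩)
    have hl0 : l ≠ i₀ := by
      rintro rfl
      simp [hi0] at hcl
    have hwl : (rowSupport S l).card = α := by
      have h1 := hammingDist_add S l i₀
      have h2 : (rowSupport S l).card ≠ α + 1 := fun h => hlT (by simp [hT, h])
      rw [hi0, Finset.inter_empty, Finset.card_empty] at h1
      rcases hham l i₀ hl0 with h | h <;> omega
    -- by parity, row `l` meets all supports of weight `α + 1` in equally many columns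
    have hμ : ∀ j ∈ T, (rowSupport S l ∩ rowSupport S j).card = (α + 1) / 2 := by
      intro j hj
      have h1 := hammingDist_add S l j
      rw [hwl, hk j hj] at h1
      have hlj : l ≠ j := by
        rintro rfl
        exact hlT hj
      rcases hham l j hlj with h | h <;> omega
    obtain ⟨j, hj, hjl⟩ : ∃ j ∈ T, ∀ y ∈ rowSupport S j \ K, y ∉ rowSupport S l := by
      by_contra! hno
      have := card_le_of_meets T (fun j => rowSupport S j \ K) (rowSupport S l) ?_ hno
      · omega
      · intro a ha b hb hab
        rw [Finset.disjoint_left]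
        intro y hy hy'
        rw [Finset.mem_sdiff] at hy hy'
        exact hy.2 ((hinter a ha b hb hab) ▸ Finset.mem_inter.mpr ⟨hy.1, hy'.1⟩)
    have hsub : rowSupport S l ∩ rowSupport S j ⊆ rowSupport S l ∩ K := by
      intro y hy
      rw [Finset.mem_inter] at hy ⊢
      refine ⟨hy.1, ?_⟩
      by_contra hyK
      exact hjl y (Finset.mem_sdiff.mpr ⟨hy.2, hyK⟩) hy.1
    have heq : rowSupport S l ∩ K = rowSupport S l ∩ rowSupport S i :=
      Finset.eq_of_subset_of_card_le (Finset.inter_subset_inter_left (hKs i hi)) (by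
        rw [hμ i hi, ← hμ j hj]
        exact Finset.card_le_card hsub)
    have : c ∈ rowSupport S l ∩ K := heq ▸ Finset.mem_inter.mpr ⟨hcl, hc⟩
    exact hcK (Finset.mem_inter.mp this).2
  have hic : S i c = true := by simpa [rowSupport] using hc
  refine hiness c ⟨⟨i, fun l hl => ?_, fun l l' hl hl' => ?_⟩, fun a b hab => ?_⟩
  · simp [hic, hother l hl]
  · exact (hother l hl).trans (hother l' hl').symm
  · have h1 : 1 < (univ.filter fun x => S a x ≠ S b x).card := by
      have := hham a b hab
      unfold hammingDist at this
      omega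
    -- two rows differ in at least two columns, so in one other than `c`
    obtain ⟨x, hx, hxc⟩ := Finset.exists_mem_ne h1 c
    exact ⟨x, hxc, (Finset.mem_filter.mp hx).2⟩
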